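/- arXiv:2106.12977 — 4 statements merged into one kernel-verified Lean document; each statement's English description precedes it below -/
import Mathlib

section
/- A matching μ is stable for the matching problem if and only if μ is S*-stable, where S* is the normal form; in particular the matching problem and its normal form have exactly the same set of stable matchings. -/
/-- `(w,f)` blocks the matching `μ`: `f ≻_w μ(w)` and `w ≻_f μ⁻¹(f)`.
`prefW w f f'` means worker `w` strictly prefers firm `f` to firm `f'`;
`prefF f w w'` means firm `f` strictly prefers worker `w` to worker `w'`. -/
def Blocks {W F : Type*} (prefW : W → F → F → Prop) (prefF : F → W → W → Prop)
    (μ : W ≃ F) (w : W) (f : F) : Prop :=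
  prefW w f (μ w) ∧ prefF f w (μ.symm f)

/-- A matching is stable if no pair blocks it. -/
def IsStableMatching {W F : Type*} (prefW : W → F → F → Prop)
    (prefF : F → W → W → Prop) (μ : W ≃ F) : Prop :=
  ∀ w f, ¬ Blocks prefW prefF μ w f

/-- A pair `(w,f)` is unattractive in `S`. -/
def Unattractive {W F : Type*} (prefW : W → F → F → Prop) (prefF : F → W → W → Prop)
    (S : Set (W × F)) (w : W) (f : F) : Prop :=
  (∃ f', (w, f') ∈ S ∧ prefW w f' f ∧
      ∀ w', w' ≠ w → (w', f') ∈ S → prefF f' w w') ∨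
  (∃ w', (w', f) ∈ S ∧ prefF f w' w ∧
      ∀ f'', f'' ≠ f → (w', f'') ∈ S → prefW w' f f'')

/-- `delta S` is `S` with all pairs unattractive in `S` removed. -/
def delta {W F : Type*} (prefW : W → F → F → Prop) (prefF : F → W → W → Prop)
    (S : Set (W × F)) : Set (W × F) :=
  {p ∈ S | ¬ Unattractive prefW prefF S p.1 p.2}

/-- The normal form: the fixed point of `delta` reached by iterating from `W × F`.
Since `delta S ⊆ S` and `W × F` is finite, `Fintype.card (W × F)` iterations suffice. -/
def NormalForm (W F : Type*) [Fintype W] [Fintype F]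
    (prefW : W → F → F → Prop) (prefF : F → W → W → Prop) : Set (W × F) :=
  (delta prefW prefF)^[Fintype.card (W × F)] Set.univ

/-- `μ` is `S`-stable: `S`-admissible and no pair of `S` blocks it within `S`. -/
def SStable {W F : Type*} (prefW : W → F → F → Prop) (prefF : F → W → W → Prop)
    (S : Set (W × F)) (μ : W ≃ F) : Prop :=
  (∀ w, (w, μ w) ∈ S) ∧
  ∀ w f, (w, f) ∈ S → ¬ (prefW w f (μ w) ∧ prefF f w (μ.symm f))

/-- Arcs of the matching digraph `D(S)`: from `(w,f)` to `(w,f')` whenever `f' ≻_w f`,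
and from `(w,f)` to `(w',f)` whenever `w' ≻_f w`. -/
def Arc {W F : Type*} (prefW : W → F → F → Prop) (prefF : F → W → W → Prop)
    (S : Set (W × F)) (p q : W × F) : Prop :=
  p ∈ S ∧ q ∈ S ∧
    ((p.1 = q.1 ∧ prefW p.1 q.2 p.2) ∨ (p.2 = q.2 ∧ prefF p.2 q.1 p.1))

/-- `D(S)` contains a directed cycle: distinct vertices `c 0, …, c (n-1)` with `n ≥ 1`,
`c n = c 0`, and an arc from each vertex to the next. -/
def HasDirectedCycle {W F : Type*} (prefW : W → F → F → Prop)
    (prefF : F → W → W → Prop) (S : Set (W × F)) : Prop :=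
  ∃ (n : ℕ) (c : Fin (n + 1) → W × F), 0 < n ∧
    Function.Injective (fun i : Fin n => c i.castSucc) ∧
    c (Fin.last n) = c 0 ∧
    ∀ i : Fin n, Arc prefW prefF S (c i.castSucc) (c i.succ)

/-- The preference lists possess a cycle: there are `k ≥ 2`, distinct workers
`w_1, …, w_k` and distinct firms `f_1, …, f_k` (indexed by `ZMod k`) with
`f_{j+1} ≻_{w_j} f_j` and `w_j ≻_{f_j} w_{j-1}` for all `j`, indices modulo `k`. -/
def PrefCycle {W F : Type*} (prefW : W → F → F → Prop)
    (prefF : F → W → W → Prop) : Prop :=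
  ∃ k : ℕ, 2 ≤ k ∧ ∃ (ws : ZMod k → W) (fs : ZMod k → F),
    Function.Injective ws ∧ Function.Injective fs ∧
    ∀ j : ZMod k, prefW (ws j) (fs (j + 1)) (fs j) ∧ prefF (fs j) (ws j) (ws (j - 1))

theorem unattractive_swap {W F : Type*} (prefW : W → F → F → Prop)
    (prefF : F → W → W → Prop) (S : Set (W × F)) (w : W) (f : F) :
    Unattractive prefF prefW (Prod.swap ⁻¹' S) f w ↔ Unattractive prefW prefF S w f :=
  or_comm

/-- If a pair of `S` blocks `μ` and its worker is the firm's favourite within `S`, then the best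
such pair for that worker is a blocking pair surviving in `delta S`. -/
theorem exists_blocks_mem_delta_of_favourite {W F : Type*} [Finite F]
    {prefW : W → F → F → Prop} {prefF : F → W → W → Prop}
    (hW : ∀ w, IsStrictTotalOrder F (prefW w)) (hF : ∀ f, IsStrictTotalOrder W (prefF f))
    {S : Set (W × F)} {μ : W ≃ F} (hμ : ∀ w, (w, μ w) ∈ S) {w : W} {f : F}
    (hS : (w, f) ∈ S) (hb : prefW w f (μ w))
    (hfav : ∀ w', w' ≠ w → (w', f) ∈ S → prefF f w w') :
    ∃ f, (w, f) ∈ delta prefW prefF S ∧ Blocks prefW prefF μ w f := by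
  have := hW w
  obtain ⟨m, ⟨hmS, hmb, hmfav⟩, hmin⟩ :=
    (Finite.wellFounded_of_trans_of_irrefl (prefW w)).has_min
      {f | (w, f) ∈ S ∧ prefW w f (μ w) ∧ ∀ w', w' ≠ w → (w', f) ∈ S → prefF f w w'}
      ⟨f, hS, hb, hfav⟩
  refine ⟨m, ⟨hmS, ?_⟩, hmb, hmfav _ ?_ ?_⟩
  · rintro (⟨f', h'S, hpref, h'fav⟩ | ⟨w', h'S, hpref, -⟩)
    · exact hmin f' ⟨h'S, _root_.trans hpref hmb, h'fav⟩ hpref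
    · have := hF m
      have hne : w' ≠ w := by
        rintro rfl
        exact irrefl _ hpref
      exact asymm hpref (hmfav w' hne h'S)
  · rintro rfl
    rw [μ.apply_symm_apply] at hmb
    exact irrefl _ hmb
  · simpa using hμ (μ.symm m)

theorem sStable_delta_iff {W F : Type*} [Finite W] [Finite F]
    {prefW : W → F → F → Prop} {prefF : F → W → W → Prop}
    (hW : ∀ w, IsStrictTotalOrder F (prefW w)) (hF : ∀ f, IsStrictTotalOrder W (prefF f))
    (S : Set (W × F)) (μ : W ≃ F) :
    SStable prefW prefF (delta prefW prefF S) μ ↔ SStable prefW prefF S μ := by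
  have hμ' (hμ : ∀ w, (w, μ w) ∈ S) (f : F) : (f, μ.symm f) ∈ Prod.swap ⁻¹' S := by
    simpa using hμ (μ.symm f)
  -- An unattractive pair that is matched or blocking yields a blocking pair in `delta S`.
  have key (hμ : ∀ w, (w, μ w) ∈ S) {w : W} {f : F} (hu : Unattractive prefW prefF S w f)
      (hw : f = μ w ∨ prefW w f (μ w)) (hf : w = μ.symm f ∨ prefF f w (μ.symm f)) :
      ∃ w f, (w, f) ∈ delta prefW prefF S ∧ Blocks prefW prefF μ w f := by
    have := hW w
    have := hF f
    rcases hu with ⟨f', hS, hpref, hfav⟩ | ⟨w', hS, hpref, hfav⟩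
    · have hb : prefW w f' (μ w) := hw.elim (fun h => h ▸ hpref) (_root_.trans hpref)
      exact ⟨w, exists_blocks_mem_delta_of_favourite hW hF hμ hS hb hfav⟩
    · have hb : prefF f w' (μ.symm f) := hf.elim (fun h => h ▸ hpref) (_root_.trans hpref)
      obtain ⟨v, ⟨hvS, hvu⟩, hv⟩ := exists_blocks_mem_delta_of_favourite
        (S := Prod.swap ⁻¹' S) (μ := μ.symm) hF hW (hμ' hμ) hS hb hfav
      exact ⟨v, f, ⟨hvS, mt (unattractive_swap prefW prefF S v f).2 hvu⟩, hv.2, hv.1⟩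
  constructor
  · rintro ⟨hadm, hstab⟩
    have hμ w : (w, μ w) ∈ S := (hadm w).1
    refine ⟨hμ, fun w f hS hb => ?_⟩
    by_cases hu : Unattractive prefW prefF S w f
    · obtain ⟨v, g, hvg, hblk⟩ := key hμ hu (.inr hb.1) (.inr hb.2)
      exact hstab v g hvg hblk
    · exact hstab w f ⟨hS, hu⟩ hb
  · rintro ⟨hμ, hstab⟩
    refine ⟨fun w => ⟨hμ w, fun hu => ?_⟩, fun w f hS => hstab w f hS.1⟩
    obtain ⟨v, g, hvg, hblk⟩ := key hμ hu (.inl rfl) (.inl (μ.symm_apply_apply w).symm)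
    exact hstab v g hvg.1 hblk

theorem sStable_iterate_delta_iff {W F : Type*} [Finite W] [Finite F]
    {prefW : W → F → F → Prop} {prefF : F → W → W → Prop}
    (hW : ∀ w, IsStrictTotalOrder F (prefW w)) (hF : ∀ f, IsStrictTotalOrder W (prefF f))
    (S : Set (W × F)) (μ : W ≃ F) (n : ℕ) :
    SStable prefW prefF ((delta prefW prefF)^[n] S) μ ↔ SStable prefW prefF S μ := by
  induction n with
  | zero => rfl
  | succ n ih => rw [Function.iterate_succ_apply', sStable_delta_iff hW hF, ih]

theorem sStable_univ_iff {W F : Type*} (prefW : W → F → F → Prop) (prefF : F → W → W → Prop)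
    (μ : W ≃ F) : SStable prefW prefF Set.univ μ ↔ IsStableMatching prefW prefF μ := by
  simp [SStable, IsStableMatching, Blocks]

/-- A matching is stable iff it is `S*`-stable, where `S*` is the normal form. -/
theorem stable_iff_normalForm_stable {W F : Type*} [Fintype W] [Fintype F] [Nonempty W]
    (hcard : Fintype.card W = Fintype.card F)
    (prefW : W → F → F → Prop) (prefF : F → W → W → Prop)
    (hW : ∀ w, IsStrictTotalOrder F (prefW w))
    (hF : ∀ f, IsStrictTotalOrder W (prefF f))
    (μ : W ≃ F) :
    IsStableMatching prefW prefF μ ↔ SStable prefW prefF (NormalForm W F prefW prefF) μ := by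
  rw [NormalForm, sStable_iterate_delta_iff hW hF, sStable_univ_iff]
end

section
/- If the normal form S* contains two distinct pairs that share the same worker or share the same firm, then the matching problem has at least two distinct stable matchings. -/
/-- `b` is the favourite partner of `a` among the pairs of `S`. -/
def IsFavourite {A B : Type*} (pref : A → B → B → Prop) (S : Set (A × B)) (a : A) (b : B) :
    Prop :=
  (a, b) ∈ S ∧ ∀ c, c ≠ b → (a, c) ∈ S → pref a b c

/-- Every pair outside `S` is dominated by a favourite pair of `S`. -/
def ExclusionJustified {A B : Type*} (prefA : A → B → B → Prop) (prefB : B → A → A → Prop)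
    (S : Set (A × B)) : Prop :=
  ∀ a b, (a, b) ∉ S →
    (∃ a', IsFavourite prefA S a' b ∧ prefB b a' a) ∨
    (∃ b', IsFavourite prefB (Prod.swap ⁻¹' S) b' a ∧ prefA a b' b)

section

variable {A B : Type*} {prefA : A → B → B → Prop} {prefB : B → A → A → Prop}
  {S : Set (A × B)}

theorem exists_minimal_of_isStrictTotalOrder {α : Type*} [Finite α] (r : α → α → Prop)
    [IsStrictTotalOrder α r] (s : Set α) (hs : s.Nonempty) :
    ∃ m ∈ s, ∀ x ∈ s, x ≠ m → r m x := by
  obtain ⟨m, hm, h⟩ := (Finite.wellFounded_of_trans_of_irrefl r).has_min s hs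
  refine ⟨m, hm, fun x hx hne => ?_⟩
  rcases trichotomous_of r m x with h1 | h1 | h1
  · exact h1
  · exact absurd h1.symm hne
  · exact absurd h1 (h x hx)

theorem IsFavourite.unique (hA : ∀ a, IsStrictTotalOrder B (prefA a)) {a : A} {b b' : B}
    (h : IsFavourite prefA S a b) (h' : IsFavourite prefA S a b') : b = b' := by
  by_contra hne
  have := hA a
  exact asymm_of (prefA a) (h.2 b' (Ne.symm hne) h'.1) (h'.2 b hne h.1)

theorem unattractive_iff (a : A) (b : B) :
    Unattractive prefA prefB S a b ↔
      (∃ b', IsFavourite prefB (Prod.swap ⁻¹' S) b' a ∧ prefA a b' b) ∨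
      (∃ a', IsFavourite prefA S a' b ∧ prefB b a' a) := by
  simp only [Unattractive, IsFavourite, Set.mem_preimage, Prod.swap_prod_mk]
  grind

theorem mem_delta_iff {p : A × B} :
    p ∈ delta prefA prefB S ↔ p ∈ S ∧ ¬ Unattractive prefA prefB S p.1 p.2 := Iff.rfl

theorem delta_swap :
    delta prefB prefA (Prod.swap ⁻¹' S) = Prod.swap ⁻¹' delta prefA prefB S := by
  ext ⟨b, a⟩
  simp only [mem_delta_iff, Set.mem_preimage, Prod.swap_prod_mk, Unattractive]
  grind

/-- A favourite in `S` of some `a` remains a favourite in `delta S`, of `a` or of someone it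
prefers to `a`. -/
theorem IsFavourite.exists_delta [Finite A] (hA : ∀ a, IsStrictTotalOrder B (prefA a))
    (hB : ∀ b, IsStrictTotalOrder A (prefB b)) {a : A} {b : B} (h : IsFavourite prefA S a b) :
    ∃ a', IsFavourite prefA (delta prefA prefB S) a' b ∧ (a = a' ∨ prefB b a' a) := by
  have := hB b
  obtain ⟨m, hm, hmin⟩ :=
    exists_minimal_of_isStrictTotalOrder (prefB b) {x | IsFavourite prefA S x b} ⟨a, h⟩
  refine ⟨m, ⟨⟨hm.1, ?_⟩, fun b' hb' hmem => hm.2 b' hb' hmem.1⟩, ?_⟩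
  · rw [unattractive_iff]
    rintro (⟨b', hb', hp⟩ | ⟨a', ha', hp⟩)
    · have := hA m
      have hne : b' ≠ b := by
        rintro rfl
        exact irrefl_of (prefA m) _ hp
      exact asymm_of (prefA m) hp (hm.2 b' hne hb'.1)
    · have hne : a' ≠ m := by
        rintro rfl
        exact irrefl_of (prefB b) _ hp
      exact asymm_of (prefB b) hp (hmin a' ha' hne)
  · by_cases hne : a = m
    · exact Or.inl hne
    · exact Or.inr (hmin a h hne)

theorem ExclusionJustified.delta [Finite A] [Finite B]
    (hA : ∀ a, IsStrictTotalOrder B (prefA a)) (hB : ∀ b, IsStrictTotalOrder A (prefB b))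
    (h : ExclusionJustified prefA prefB S) :
    ExclusionJustified prefA prefB (delta prefA prefB S) := by
  intro a b hab
  have hS : (∃ a', IsFavourite prefA S a' b ∧ prefB b a' a) ∨
      (∃ b', IsFavourite prefB (Prod.swap ⁻¹' S) b' a ∧ prefA a b' b) := by
    by_cases hmem : (a, b) ∈ S
    · have : Unattractive prefA prefB S a b := by
        by_contra hc
        exact hab ⟨hmem, hc⟩
      exact ((unattractive_iff a b).1 this).symm
    · exact h a b hmem
  rcases hS with ⟨a', ha', hp⟩ | ⟨b', hb', hp⟩
  · obtain ⟨c, hc, hcp⟩ := ha'.exists_delta hA hB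
    have := hB b
    refine Or.inl ⟨c, hc, ?_⟩
    rcases hcp with rfl | hcp
    · exact hp
    · exact trans_of (prefB b) hcp hp
  · obtain ⟨c, hc, hcp⟩ := hb'.exists_delta hB hA
    rw [delta_swap] at hc
    have := hA a
    refine Or.inr ⟨c, hc, ?_⟩
    rcases hcp with rfl | hcp
    · exact hp
    · exact trans_of (prefA a) hcp hp

theorem ExclusionJustified.swap (h : ExclusionJustified prefA prefB S) :
    ExclusionJustified prefB prefA (Prod.swap ⁻¹' S) :=
  fun b a hba => (h a b hba).symm

/-- A deflationary map on subsets of a finite type stabilises after `card` iterations. -/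
theorem apply_iterate_card_eq_of_subset {α : Type*} [Fintype α] (g : Set α → Set α)
    (hg : ∀ s, g s ⊆ s) :
    g (g^[Fintype.card α] Set.univ) = g^[Fintype.card α] Set.univ := by
  have key : ∀ n, g (g^[n] Set.univ) = g^[n] Set.univ ∨
      (g^[n] Set.univ).ncard + n ≤ Fintype.card α := by
    intro n
    induction n with
    | zero => right; simp [Set.ncard_univ]
    | succ n ih =>
      rw [Function.iterate_succ_apply']
      by_cases hfix : g (g^[n] Set.univ) = g^[n] Set.univ
      · left; rw [hfix, hfix]
      · right
        have hlt := Set.ncard_lt_ncard ((hg (g^[n] Set.univ)).ssubset_of_ne hfix)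
        have := ih.resolve_left hfix
        omega
  rcases key (Fintype.card α) with h | h
  · exact h
  · have h0 : g^[Fintype.card α] Set.univ = ∅ := by
      rw [← Set.ncard_eq_zero]
      omega
    rw [h0]
    exact Set.subset_empty_iff.1 (hg ∅)

theorem delta_normalForm [Fintype A] [Fintype B] :
    delta prefA prefB (NormalForm A B prefA prefB) = NormalForm A B prefA prefB :=
  apply_iterate_card_eq_of_subset _ fun _ _ h => h.1

theorem exclusionJustified_normalForm [Fintype A] [Fintype B]
    (hA : ∀ a, IsStrictTotalOrder B (prefA a)) (hB : ∀ b, IsStrictTotalOrder A (prefB b)) :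
    ExclusionJustified prefA prefB (NormalForm A B prefA prefB) := by
  unfold NormalForm
  generalize Fintype.card (A × B) = n
  induction n with
  | zero => exact fun a b h => absurd (Set.mem_univ _) h
  | succ n ih =>
    rw [Function.iterate_succ_apply']
    exact ih.delta hA hB

theorem not_unattractive_of_delta_eq (hS : delta prefA prefB S = S) {a : A} {b : B}
    (h : (a, b) ∈ S) : ¬ Unattractive prefA prefB S a b := by
  rw [← hS] at h
  exact h.2

/-- In a fixed point of `delta`, two workers cannot share a favourite firm. -/
theorem IsFavourite.left_unique_of_delta_eq (hB : ∀ b, IsStrictTotalOrder A (prefB b))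
    (hS : delta prefA prefB S = S) {a a' : A} {b : B} (h : IsFavourite prefA S a b)
    (h' : IsFavourite prefA S a' b) : a = a' := by
  have := hB b
  rcases trichotomous_of (prefB b) a a' with hlt | heq | hlt
  · exact absurd ((unattractive_iff a' b).2 (Or.inr ⟨a, h, hlt⟩))
      (not_unattractive_of_delta_eq hS h'.1)
  · exact heq
  · exact absurd ((unattractive_iff a b).2 (Or.inr ⟨a', h', hlt⟩))
      (not_unattractive_of_delta_eq hS h.1)

theorem ExclusionJustified.exists_isFavourite [Fintype A] [Fintype B]
    (hcard : Fintype.card A = Fintype.card B) (hA : ∀ a, IsStrictTotalOrder B (prefA a))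
    (h : ExclusionJustified prefA prefB S) (a : A) : ∃ b, IsFavourite prefA S a b := by
  have hne : {b | (a, b) ∈ S}.Nonempty := by
    by_contra hempty
    have hnot : ∀ b, (a, b) ∉ S := fun b hb => hempty ⟨b, hb⟩
    have hfav : ∀ b, ∃ a', IsFavourite prefA S a' b := fun b => by
      rcases h a b (hnot b) with ⟨a', ha', -⟩ | ⟨b', hb', -⟩
      · exact ⟨a', ha'⟩
      · exact absurd hb'.1 (hnot b')
    choose g hg using hfav
    have hinj : Function.Injective g := fun b b' hbb' =>
      (hg b).unique hA (hbb' ▸ hg b')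
    obtain ⟨b, rfl⟩ :=
      ((Fintype.bijective_iff_injective_and_card g).2 ⟨hinj, hcard.symm⟩).2 a
    exact hnot b (hg b).1
  have := hA a
  obtain ⟨m, hm, hmin⟩ := exists_minimal_of_isStrictTotalOrder (prefA a) _ hne
  exact ⟨m, hm, fun c hc hmem => hmin c hmem hc⟩

/-- In a fixed point of `delta` whose exclusions are justified, matching everyone with their
favourite is a stable matching. -/
theorem exists_stable_isFavourite [Fintype A] [Fintype B]
    (hcard : Fintype.card A = Fintype.card B) (hA : ∀ a, IsStrictTotalOrder B (prefA a))
    (hB : ∀ b, IsStrictTotalOrder A (prefB b)) (h : ExclusionJustified prefA prefB S)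
    (hS : delta prefA prefB S = S) :
    ∃ μ : A ≃ B, IsStableMatching prefA prefB μ ∧ ∀ a, IsFavourite prefA S a (μ a) := by
  choose g hg using h.exists_isFavourite hcard hA
  have hinj : Function.Injective g := fun a a' haa' =>
    (hg a).left_unique_of_delta_eq hB hS (haa' ▸ hg a')
  let μ : A ≃ B :=
    Equiv.ofBijective g ((Fintype.bijective_iff_injective_and_card g).2 ⟨hinj, hcard⟩)
  have hμ : ∀ a, IsFavourite prefA S a (μ a) := hg
  refine ⟨μ, ?_, hμ⟩
  rintro a b ⟨hab, hba⟩
  have := hA a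
  have := hB b
  have hout : ∀ b', prefA a b' (μ a) → (a, b') ∉ S := fun b' hb' hmem => by
    have hne : b' ≠ μ a := by
      rintro rfl
      exact irrefl_of (prefA a) _ hb'
    exact asymm_of (prefA a) hb' ((hμ a).2 b' hne hmem)
  rcases h a b (hout b hab) with ⟨a', ha', hp⟩ | ⟨b', hb', hp⟩
  · have : a' = μ.symm b := by
      rw [Equiv.eq_symm_apply]
      exact (hμ a').unique hA ha'
    subst this
    exact asymm_of (prefB b) hp hba
  · exact hout b' (trans_of (prefA a) hp hab) hb'.1

theorem IsStableMatching.symm {μ : A ≃ B} (h : IsStableMatching prefA prefB μ) :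
    IsStableMatching prefB prefA μ.symm :=
  fun b a hb => h a b ⟨hb.2, hb.1⟩

/-- In a fixed point of `delta`, mutual favourites have no other partner. -/
theorem eq_of_mutual_favourites (hS : delta prefA prefB S = S) {a : A} {b c : B}
    (h : IsFavourite prefA S a b) (h' : IsFavourite prefB (Prod.swap ⁻¹' S) b a)
    (hc : (a, c) ∈ S) : c = b := by
  by_contra hne
  exact not_unattractive_of_delta_eq hS hc
    ((unattractive_iff a c).2 (Or.inl ⟨b, h', h.2 c hne hc⟩))

end

/-- If the normal form contains two distinct pairs sharing a worker or sharing a firm,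
then there are at least two distinct stable matchings. -/
theorem two_stable_of_normalForm_share {W F : Type*} [Fintype W] [Fintype F] [Nonempty W]
    (hcard : Fintype.card W = Fintype.card F)
    (prefW : W → F → F → Prop) (prefF : F → W → W → Prop)
    (hW : ∀ w, IsStrictTotalOrder F (prefW w))
    (hF : ∀ f, IsStrictTotalOrder W (prefF f))
    (p q : W × F)
    (hp : p ∈ NormalForm W F prefW prefF) (hq : q ∈ NormalForm W F prefW prefF)
    (hne : p ≠ q) (hshare : p.1 = q.1 ∨ p.2 = q.2) :
    ∃ μ₁ μ₂ : W ≃ F, IsStableMatching prefW prefF μ₁ ∧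
      IsStableMatching prefW prefF μ₂ ∧ μ₁ ≠ μ₂ := by
  have hJ := exclusionJustified_normalForm hW hF
  have hS := delta_normalForm (prefA := prefW) (prefB := prefF)
  generalize NormalForm W F prefW prefF = S at hp hq hJ hS
  obtain ⟨μ, hμ, hμfav⟩ := exists_stable_isFavourite hcard hW hF hJ hS
  obtain ⟨ν, hν, hνfav⟩ := exists_stable_isFavourite hcard.symm hF hW hJ.swap
    (by rw [delta_swap, hS])
  refine ⟨μ, ν.symm, hμ, hν.symm, fun heq => hne ?_⟩
  have honly : ∀ r ∈ S, r.2 = μ r.1 := fun r hr => by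
    refine eq_of_mutual_favourites hS (hμfav r.1) ?_ hr
    have := hνfav (μ r.1)
    rwa [show ν (μ r.1) = r.1 by rw [heq, Equiv.apply_symm_apply]] at this
  have hp' := honly p hp
  have hq' := honly q hq
  rcases hshare with h | h
  · exact Prod.ext h (by rw [hp', hq', h])
  · exact Prod.ext (μ.injective (by rw [← hp', ← hq', h])) h
end

section
/- If every worker belongs to exactly one pair of the normal form S* and every firm belongs to exactly one pair of S*, then S* is the graph of a bijection μ : W → F, and μ is the unique stable matching of the matching problem. -/
section MatchingReduction

variable {W F : Type*} {prefW : W → F → F → Prop} {prefF : F → W → W → Prop}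
  {S : Set (W × F)} {μ : W ≃ F}

theorem delta_subset : delta prefW prefF S ⊆ S := fun _ hp => hp.1

theorem delta_iterate_subset (n : ℕ) : (delta prefW prefF)^[n] S ⊆ S := by
  induction n generalizing S with
  | zero => exact subset_rfl
  | succ n ih => exact ih.trans delta_subset

theorem Unattractive.swap {w : W} {f : F} (h : Unattractive prefW prefF S w f) :
    Unattractive prefF prefW (Prod.swap ⁻¹' S) f w :=
  Or.symm h

theorem Blocks.swap {w : W} {f : F} (h : Blocks prefF prefW μ.symm f w) :
    Blocks prefW prefF μ w f :=
  And.symm h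

/-- A firm that ranks `w` above all its other partners in `S` would form a blocking pair with `w`
whenever `w` prefers it to `μ w`. -/
theorem blocks_of_top (hW : ∀ w, IsStrictTotalOrder F (prefW w)) (hμ : ∀ w, (w, μ w) ∈ S)
    {w : W} {f : F} (hpref : prefW w f (μ w))
    (htop : ∀ w', w' ≠ w → (w', f) ∈ S → prefF f w w') : Blocks prefW prefF μ w f := by
  have := hW w
  refine ⟨hpref, htop _ ?_ (by simpa using hμ (μ.symm f))⟩
  rintro rfl
  exact irrefl_of (prefW _) f (by simpa using hpref)

/-- Pairs of a stable matching contained in `S` survive one reduction step. -/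
theorem IsStableMatching.graph_subset_delta (hW : ∀ w, IsStrictTotalOrder F (prefW w))
    (hF : ∀ f, IsStrictTotalOrder W (prefF f)) (hst : IsStableMatching prefW prefF μ)
    (hμ : ∀ w, (w, μ w) ∈ S) (w : W) : (w, μ w) ∈ delta prefW prefF S := by
  refine ⟨hμ w, ?_⟩
  rintro (⟨f, -, hpref, htop⟩ | ⟨w', -, hpref, htop⟩)
  · exact hst w f (blocks_of_top hW hμ hpref htop)
  · refine hst w' (μ w) (Blocks.swap ?_)
    exact blocks_of_top (S := Prod.swap ⁻¹' S) hF
      (fun f => by simpa using hμ (μ.symm f)) (by simpa using hpref) htop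

theorem IsStableMatching.graph_subset_delta_iterate (hW : ∀ w, IsStrictTotalOrder F (prefW w))
    (hF : ∀ f, IsStrictTotalOrder W (prefF f)) (hst : IsStableMatching prefW prefF μ)
    (n : ℕ) (hμ : ∀ w, (w, μ w) ∈ S) (w : W) : (w, μ w) ∈ (delta prefW prefF)^[n] S := by
  induction n generalizing S with
  | zero => exact hμ w
  | succ n ih => exact ih (hst.graph_subset_delta hW hF hμ)

/-- If every pair of `S` blocking `μ` is unattractive in `S`, then no worker `w` has a partner in
`S` that `w` prefers to `μ w` and that ranks `w` on top: such a partner would be removed because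
of a still better one, and so on indefinitely. -/
theorem not_top_of_blocks_unattractive [Finite F] (hW : ∀ w, IsStrictTotalOrder F (prefW w))
    (hF : ∀ f, IsStrictTotalOrder W (prefF f)) (hμ : ∀ w, (w, μ w) ∈ S)
    (hun : ∀ w f, (w, f) ∈ S → Blocks prefW prefF μ w f → Unattractive prefW prefF S w f)
    (w : W) (f : F) (hS : (w, f) ∈ S) (hpref : prefW w f (μ w)) :
    ¬ ∀ w', w' ≠ w → (w', f) ∈ S → prefF f w w' := by
  have := hW w
  induction f using (Finite.wellFounded_of_trans_of_irrefl (prefW w)).induction with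
  | h f ih =>
    intro htop
    have := hF f
    obtain ⟨f', hS', hpref', htop'⟩ | ⟨w', hS', hpref', -⟩ :=
      hun w f hS (blocks_of_top hW hμ hpref htop)
    · exact ih f' hpref' hS' (trans_of (prefW w) hpref' hpref) htop'
    · refine asymm_of (prefF f) hpref' (htop w' ?_ hS')
      rintro rfl
      exact irrefl_of (prefF f) _ hpref'

/-- If no pair of `delta S` blocks `μ`, then no pair of `S` does. -/
theorem not_blocks_of_delta [Finite W] [Finite F] (hW : ∀ w, IsStrictTotalOrder F (prefW w))
    (hF : ∀ f, IsStrictTotalOrder W (prefF f)) (hμ : ∀ w, (w, μ w) ∈ S)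
    (hδ : ∀ w f, (w, f) ∈ delta prefW prefF S → ¬ Blocks prefW prefF μ w f)
    (w : W) (f : F) (hS : (w, f) ∈ S) : ¬ Blocks prefW prefF μ w f := by
  have hun : ∀ w f, (w, f) ∈ S → Blocks prefW prefF μ w f →
      Unattractive prefW prefF S w f :=
    fun w f hS hb => by_contra fun hn => hδ w f ⟨hS, hn⟩ hb
  intro hb
  have := hW w
  have := hF f
  obtain ⟨f', hS', hpref, htop⟩ | ⟨w', hS', hpref, htop⟩ := hun w f hS hb
  · exact not_top_of_blocks_unattractive hW hF hμ hun w f' hS'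
      (trans_of (prefW w) hpref hb.1) htop
  · exact not_top_of_blocks_unattractive (S := Prod.swap ⁻¹' S) (μ := μ.symm) hF hW
      (fun f => by simpa using hμ (μ.symm f)) (fun f w hS hb => (hun w f hS hb.swap).swap)
      f w' hS' (trans_of (prefF f) hpref hb.2) htop

theorem not_blocks_of_delta_iterate [Finite W] [Finite F]
    (hW : ∀ w, IsStrictTotalOrder F (prefW w)) (hF : ∀ f, IsStrictTotalOrder W (prefF f))
    (n : ℕ) (hμ : ∀ w, (w, μ w) ∈ (delta prefW prefF)^[n] S)
    (hδ : ∀ w f, (w, f) ∈ (delta prefW prefF)^[n] S → ¬ Blocks prefW prefF μ w f)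
    (w : W) (f : F) (hS : (w, f) ∈ S) : ¬ Blocks prefW prefF μ w f := by
  induction n generalizing S w f with
  | zero => exact hδ w f hS
  | succ n ih =>
    exact not_blocks_of_delta hW hF (fun w => delta_iterate_subset (n + 1) (hμ w))
      (fun w f h => ih hμ hδ w f h) w f hS

end MatchingReduction

/-- If every worker and every firm belongs to exactly one pair of `S*`, then `S*` is the
graph of a bijection which is the unique stable matching. -/
theorem normalForm_graph_unique_stable {W F : Type*} [Fintype W] [Fintype F] [Nonempty W]
    (hcard : Fintype.card W = Fintype.card F)
    (prefW : W → F → F → Prop) (prefF : F → W → W → Prop)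
    (hW : ∀ w, IsStrictTotalOrder F (prefW w))
    (hF : ∀ f, IsStrictTotalOrder W (prefF f))
    (hw : ∀ w : W, ∃! f : F, (w, f) ∈ NormalForm W F prefW prefF)
    (hf : ∀ f : F, ∃! w : W, (w, f) ∈ NormalForm W F prefW prefF) :
    ∃ μ : W ≃ F, (∀ w f, (w, f) ∈ NormalForm W F prefW prefF ↔ μ w = f) ∧
      IsStableMatching prefW prefF μ ∧
      ∀ μ' : W ≃ F, IsStableMatching prefW prefF μ' → μ' = μ := by
  choose m hm hm' using hw
  have hbij : Function.Bijective m :=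
    ⟨fun a b hab => (hf (m a)).unique (hm a) (hab ▸ hm b), fun f =>
      let ⟨w, hwf, _⟩ := hf f
      ⟨w, (hm' w f hwf).symm⟩⟩
  refine ⟨Equiv.ofBijective m hbij, fun w f => ⟨fun h => (hm' w f h).symm, ?_⟩, ?_, ?_⟩
  · rintro rfl
    exact hm w
  · refine fun w f => not_blocks_of_delta_iterate (S := Set.univ)
      (μ := Equiv.ofBijective m hbij) hW hF (Fintype.card (W × F)) hm (fun w f h hb => ?_) w f
      (Set.mem_univ _)
    have := hW w
    have hpref : prefW w f (m w) := hb.1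
    rw [hm' w f h] at hpref
    exact irrefl_of (prefW w) _ hpref
  · intro μ' hst
    ext w
    exact hm' w _ (hst.graph_subset_delta_iterate hW hF _ (fun _ => Set.mem_univ _) w)
end

section
/- If the digraph D(S*) on the normal form S* contains no directed cycle, then every worker belongs to exactly one pair of S* and every firm belongs to exactly one pair of S*. -/
theorem mem_delta_swap {W F : Type*} (prefW : W → F → F → Prop) (prefF : F → W → W → Prop)
    (S : Set (W × F)) (w : W) (f : F) :
    (f, w) ∈ delta prefF prefW (Prod.swap ⁻¹' S) ↔ (w, f) ∈ delta prefW prefF S :=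
  and_congr Iff.rfl (not_congr or_comm)

/-- If `w` has in `S` a firm better than `f` whose `S`-favourite is `w`, the same holds
in `delta S`: the best such firm is not removed. -/
theorem exists_favourite_delta {W F : Type*} [Finite F]
    (prefW : W → F → F → Prop) (prefF : F → W → W → Prop)
    (hW : ∀ w, IsStrictTotalOrder F (prefW w)) (hF : ∀ f, IsStrictTotalOrder W (prefF f))
    {S : Set (W × F)} {w : W} {f : F}
    (h : ∃ f', (w, f') ∈ S ∧ prefW w f' f ∧
      ∀ w', w' ≠ w → (w', f') ∈ S → prefF f' w w') :
    ∃ f', (w, f') ∈ delta prefW prefF S ∧ prefW w f' f ∧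
      ∀ w', w' ≠ w → (w', f') ∈ delta prefW prefF S → prefF f' w w' := by
  have := hW w
  obtain ⟨m, ⟨hmS, hmf, hmtop⟩, hmin⟩ :=
    (Finite.wellFounded_of_trans_of_irrefl (prefW w)).has_min
      {f' | (w, f') ∈ S ∧ prefW w f' f ∧ ∀ w', w' ≠ w → (w', f') ∈ S → prefF f' w w'} h
  refine ⟨m, ⟨hmS, ?_⟩, hmf, fun w' hne hw' => hmtop w' hne hw'.1⟩
  rintro (⟨f', h1, h2, h3⟩ | ⟨w', h1, h2, -⟩)
  · exact hmin f' ⟨h1, _root_.trans h2 hmf, h3⟩ h2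
  · have := hF m
    have hne : w' ≠ w := by
      rintro rfl
      exact irrefl _ h2
    exact asymm (hmtop w' hne h1) h2

theorem Unattractive.delta {W F : Type*} [Finite W] [Finite F]
    {prefW : W → F → F → Prop} {prefF : F → W → W → Prop}
    (hW : ∀ w, IsStrictTotalOrder F (prefW w)) (hF : ∀ f, IsStrictTotalOrder W (prefF f))
    {S : Set (W × F)} {w : W} {f : F} (h : Unattractive prefW prefF S w f) :
    Unattractive prefW prefF (delta prefW prefF S) w f := by
  rcases h with h | h
  · exact Or.inl (exists_favourite_delta prefW prefF hW hF h)
  · have := exists_favourite_delta prefF prefW hF hW (S := Prod.swap ⁻¹' S) h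
    simp only [mem_delta_swap] at this
    exact Or.inr this

theorem unattractive_of_notMem_iterate_delta {W F : Type*} [Finite W] [Finite F]
    {prefW : W → F → F → Prop} {prefF : F → W → W → Prop}
    (hW : ∀ w, IsStrictTotalOrder F (prefW w)) (hF : ∀ f, IsStrictTotalOrder W (prefF f))
    (k : ℕ) {w : W} {f : F} (h : (w, f) ∉ (delta prefW prefF)^[k] Set.univ) :
    Unattractive prefW prefF ((delta prefW prefF)^[k] Set.univ) w f := by
  induction k with
  | zero => simp at h
  | succ k ih =>
    rw [Function.iterate_succ_apply'] at h ⊢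
    by_cases hk : (w, f) ∈ (delta prefW prefF)^[k] Set.univ
    · exact (not_not.mp fun hn => h ⟨hk, hn⟩ : Unattractive _ _ _ w f).delta hW hF
    · exact (ih hk).delta hW hF

theorem delta_normalForm_s14 {W F : Type*} [Fintype W] [Fintype F]
    (prefW : W → F → F → Prop) (prefF : F → W → W → Prop) :
    delta prefW prefF (NormalForm W F prefW prefF) = NormalForm W F prefW prefF := by
  have key : ∀ k, delta prefW prefF ((delta prefW prefF)^[k] Set.univ) =
      (delta prefW prefF)^[k] Set.univ ∨
      ((delta prefW prefF)^[k] Set.univ).ncard + k ≤ Fintype.card (W × F) := by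
    intro k
    induction k with
    | zero => right; simp [Set.ncard_univ]
    | succ k ih =>
      rw [Function.iterate_succ_apply']
      by_cases hfix : delta prefW prefF ((delta prefW prefF)^[k] Set.univ) =
          (delta prefW prefF)^[k] Set.univ
      · left; rw [hfix, hfix]
      · have hlt : (delta prefW prefF ((delta prefW prefF)^[k] Set.univ)).ncard <
            ((delta prefW prefF)^[k] Set.univ).ncard := Set.ncard_lt_ncard
          ((Set.sep_subset _ _ : delta prefW prefF _ ⊆ _).ssubset_of_ne hfix)
        have := ih.resolve_left hfix
        right; omega
  rcases key (Fintype.card (W × F)) with h | h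
  · exact h
  · have h0 : NormalForm W F prefW prefF = ∅ := by
      rw [← Set.ncard_eq_zero]
      unfold NormalForm
      omega
    rw [h0]
    exact Set.subset_empty_iff.mp (Set.sep_subset _ _)

/-- If all pairs outside `S` are unattractive in `S`, then no row of `S` is empty. -/
theorem exists_mem_of_unattractive {W F : Type*} [Fintype W] [Fintype F]
    (hcard : Fintype.card W = Fintype.card F)
    {prefW : W → F → F → Prop} {prefF : F → W → W → Prop}
    (hW : ∀ w, IsStrictTotalOrder F (prefW w)) (hF : ∀ f, IsStrictTotalOrder W (prefF f))
    {S : Set (W × F)} (hS : ∀ w f, (w, f) ∉ S → Unattractive prefW prefF S w f) (w : W) :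
    ∃ f, (w, f) ∈ S := by
  by_contra! hw
  have h2 : ∀ f, ∃ w', (w', f) ∈ S ∧ prefF f w' w ∧
      ∀ f'', f'' ≠ f → (w', f'') ∈ S → prefW w' f f'' := fun f =>
    (hS w f (hw f)).resolve_left fun ⟨f', h, _⟩ => hw f' h
  choose g hgS hgw hgtop using h2
  have hinj : Function.Injective g := by
    intro a b hab
    by_contra hne
    have := hW (g a)
    have h1 := hgtop a b (Ne.symm hne) (hab ▸ hgS b)
    have h2 := hgtop b a hne (hab ▸ hgS a)
    rw [← hab] at h2
    exact asymm h1 h2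
  obtain ⟨f, hf⟩ :=
    ((Fintype.bijective_iff_injective_and_card g).mpr ⟨hinj, hcard.symm⟩).surjective w
  have := hF f
  exact irrefl w (hf ▸ hgw f : prefF f w w)

theorem hasDirectedCycle_of_walk {W F : Type*} [Finite W] [Finite F]
    {prefW : W → F → F → Prop} {prefF : F → W → W → Prop} {S : Set (W × F)}
    (v : ℕ → W × F) (hv : ∀ n, Arc prefW prefF S (v n) (v (n + 1))) :
    HasDirectedCycle prefW prefF S := by
  classical
  have hex : ∃ j, ∃ i < j, v i = v j := by
    obtain ⟨a, b, hne, hab⟩ := Finite.exists_ne_map_eq_of_infinite v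
    rcases lt_or_gt_of_ne hne with h | h
    · exact ⟨b, a, h, hab⟩
    · exact ⟨a, b, h, hab.symm⟩
  obtain ⟨i, hij, hvij⟩ := Nat.find_spec hex
  have hmin := fun m => Nat.find_min hex (m := m)
  set j := Nat.find hex
  refine ⟨j - i, fun k => v (i + k), by omega, ?_, ?_, fun k => hv (i + k)⟩
  · intro a b hab
    have ha := a.isLt
    have hb := b.isLt
    simp only [Fin.val_castSucc] at hab
    rcases lt_trichotomy a.val b.val with h | h | h
    · exact absurd ⟨i + a, by omega, hab⟩ (hmin (i + b) (by omega))
    · exact Fin.ext h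
    · exact absurd ⟨i + b, by omega, hab.symm⟩ (hmin (i + a) (by omega))
  · simp only [Fin.val_last, Fin.val_zero, add_zero]
    rw [hvij, Nat.add_sub_cancel' hij.le]

/-- In a fixed point of `delta`, a vertex with an incoming arc has an outgoing arc. -/
theorem Arc.exists_arc {W F : Type*}
    {prefW : W → F → F → Prop} {prefF : F → W → W → Prop}
    (hW : ∀ w, IsStrictTotalOrder F (prefW w)) (hF : ∀ f, IsStrictTotalOrder W (prefF f))
    {S : Set (W × F)} (hS : delta prefW prefF S = S) {p q : W × F}
    (h : Arc prefW prefF S p q) : ∃ r, Arc prefW prefF S q r := by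
  by_contra! hsink
  obtain ⟨hp, hq, h⟩ := h
  obtain ⟨w, f⟩ := q
  have hf : ∀ f', f' ≠ f → (w, f') ∈ S → prefW w f f' := by
    intro f' hne hf'
    have := hW w
    rcases trichotomous_of (prefW w) f f' with h | h | h
    · exact h
    · exact absurd h.symm hne
    · exact absurd ⟨hq, hf', Or.inl ⟨rfl, h⟩⟩ (hsink (w, f'))
  have hw : ∀ w', w' ≠ w → (w', f) ∈ S → prefF f w w' := by
    intro w' hne hw'
    have := hF f
    rcases trichotomous_of (prefF f) w w' with h | h | h
    · exact h
    · exact absurd h.symm hne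
    · exact absurd ⟨hq, hw', Or.inr ⟨rfl, h⟩⟩ (hsink (w', f))
  obtain ⟨w₀, f₀⟩ := p
  have hattr : ¬ Unattractive prefW prefF S w₀ f₀ := (hS ▸ hp : _ ∈ delta prefW prefF S).2
  rcases h with ⟨h1, h2⟩ | ⟨h1, h2⟩ <;> dsimp only at h1 h2 <;> subst h1
  · exact hattr (Or.inl ⟨f, hq, h2, hw⟩)
  · exact hattr (Or.inr ⟨w, hq, h2, hf⟩)

theorem not_arc_of_acyclic {W F : Type*} [Finite W] [Finite F]
    {prefW : W → F → F → Prop} {prefF : F → W → W → Prop}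
    (hW : ∀ w, IsStrictTotalOrder F (prefW w)) (hF : ∀ f, IsStrictTotalOrder W (prefF f))
    {S : Set (W × F)} (hS : delta prefW prefF S = S)
    (hacyc : ¬ HasDirectedCycle prefW prefF S) (p q : W × F) : ¬ Arc prefW prefF S p q := by
  intro h
  choose next hnext using fun a : {a : (W × F) × (W × F) // Arc prefW prefF S a.1 a.2} =>
    a.2.exists_arc hW hF hS
  let step (a : {a : (W × F) × (W × F) // Arc prefW prefF S a.1 a.2}) :
      {a : (W × F) × (W × F) // Arc prefW prefF S a.1 a.2} := ⟨(a.1.2, next a), hnext a⟩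
  refine hacyc (hasDirectedCycle_of_walk (fun n => (step^[n] ⟨(p, q), h⟩).1.1) fun n => ?_)
  rw [Function.iterate_succ_apply']
  exact (step^[n] ⟨(p, q), h⟩).2

/-- If `D(S*)` has no directed cycle, then every worker and every firm belongs to
exactly one pair of `S*`. -/
theorem singleton_of_acyclic_normalForm {W F : Type*} [Fintype W] [Fintype F] [Nonempty W]
    (hcard : Fintype.card W = Fintype.card F)
    (prefW : W → F → F → Prop) (prefF : F → W → W → Prop)
    (hW : ∀ w, IsStrictTotalOrder F (prefW w))
    (hF : ∀ f, IsStrictTotalOrder W (prefF f))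
    (hacyc : ¬ HasDirectedCycle prefW prefF (NormalForm W F prefW prefF)) :
    (∀ w : W, ∃! f : F, (w, f) ∈ NormalForm W F prefW prefF) ∧
      (∀ f : F, ∃! w : W, (w, f) ∈ NormalForm W F prefW prefF) := by
  have hfix := delta_normalForm_s14 prefW prefF
  have hout : ∀ w f, (w, f) ∉ NormalForm W F prefW prefF →
      Unattractive prefW prefF (NormalForm W F prefW prefF) w f :=
    fun _ _ h => unattractive_of_notMem_iterate_delta hW hF _ h
  have harc := not_arc_of_acyclic hW hF hfix hacyc
  refine ⟨fun w => ?_, fun f => ?_⟩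
  · obtain ⟨f, hf⟩ := exists_mem_of_unattractive hcard hW hF hout w
    refine ⟨f, hf, fun f' hf' => ?_⟩
    have := hW w
    rcases trichotomous_of (prefW w) f' f with h | h | h
    · exact absurd ⟨hf, hf', Or.inl ⟨rfl, h⟩⟩ (harc (w, f) (w, f'))
    · exact h
    · exact absurd ⟨hf', hf, Or.inl ⟨rfl, h⟩⟩ (harc (w, f') (w, f))
  · obtain ⟨w, hw⟩ := exists_mem_of_unattractive hcard.symm hF hW
      (S := Prod.swap ⁻¹' NormalForm W F prefW prefF) (fun f w h => (hout w f h).symm) f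
    refine ⟨w, hw, fun w' hw' => ?_⟩
    have := hF f
    rcases trichotomous_of (prefF f) w' w with h | h | h
    · exact absurd ⟨hw, hw', Or.inr ⟨rfl, h⟩⟩ (harc (w, f) (w', f))
    · exact h
    · exact absurd ⟨hw', hw, Or.inr ⟨rfl, h⟩⟩ (harc (w', f) (w, f))
end
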